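/- arXiv:0907.0887 — 2 statements merged into one kernel-verified Lean document; each statement's English description precedes it below -/
import Mathlib

section
/- For sufficiently large ρ the following holds: for any two strongly distinct lattice r-subspaces V and W, one has Ξ₂(V) ∩ Ξ₂(W) ⊆ Ξ₁(V + W). -/
noncomputable section

open Set Submodule Module MeasureTheory Relation
open scoped RealInnerProductSpace

variable {d : ℕ}

/-- The lattice Γ generated over ℤ by the basis `B` of ℝ^d. -/
def latticeOf (B : Basis (Fin d) ℝ (EuclideanSpace ℝ (Fin d))) :
    Submodule ℤ (EuclideanSpace ℝ (Fin d)) :=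
  Submodule.span ℤ (Set.range B)

/-- The determinant d(Γ) of the lattice generated by `B`. -/
def latDet (B : Basis (Fin d) ℝ (EuclideanSpace ℝ (Fin d))) : ℝ :=
  |(EuclideanSpace.basisFun (Fin d) ℝ).toBasis.det (fun i => B i)|

/-- The dual lattice Γ† = {θ : θ·g ∈ 2πℤ for all g ∈ Γ}. -/
def dualLattice (B : Basis (Fin d) ℝ (EuclideanSpace ℝ (Fin d))) :
    Set (EuclideanSpace ℝ (Fin d)) :=
  {θ | ∀ g ∈ latticeOf B, ∃ k : ℤ, ⟪θ, g⟫ = 2 * Real.pi * k}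

/-- Θ_r : nonzero dual lattice vectors of norm at most r. -/
def Theta (B : Basis (Fin d) ℝ (EuclideanSpace ℝ (Fin d))) (r : ℝ) :
    Set (EuclideanSpace ℝ (Fin d)) :=
  {θ | θ ∈ dualLattice B ∧ θ ≠ 0 ∧ ‖θ‖ ≤ r}

/-- Θ_r⁰ : dual lattice vectors of norm at most r (including 0). -/
def Theta0 (B : Basis (Fin d) ℝ (EuclideanSpace ℝ (Fin d))) (r : ℝ) :
    Set (EuclideanSpace ℝ (Fin d)) :=
  {θ | θ ∈ dualLattice B ∧ ‖θ‖ ≤ r}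

/-- A lattice r-subspace: a subspace spanned by dual lattice vectors from Θ_r⁰. -/
def IsLatticeSubspace (B : Basis (Fin d) ℝ (EuclideanSpace ℝ (Fin d))) (r : ℝ)
    (V : Submodule ℝ (EuclideanSpace ℝ (Fin d))) : Prop :=
  ∃ S : Set (EuclideanSpace ℝ (Fin d)), S ⊆ Theta0 B r ∧ V = Submodule.span ℝ S

/-- Orthogonal projection ξ_V onto a subspace, viewed in the ambient space. -/
def projV (V : Submodule ℝ (EuclideanSpace ℝ (Fin d))) (ξ : EuclideanSpace ℝ (Fin d)) :
    EuclideanSpace ℝ (Fin d) :=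
  (orthogonalProjection V ξ : EuclideanSpace ℝ (Fin d))

/-- ω_n: the volume of the unit ball in ℝ^n. -/
def unitBallVol (n : ℕ) : ℝ :=
  (MeasureTheory.volume (Metric.ball (0 : EuclideanSpace ℝ (Fin n)) 1)).toReal

/-- The resonant layer Λ(θ) (= ℝ^d when θ = 0). -/
def layer (ρ a : ℝ) (θ : EuclideanSpace ℝ (Fin d)) : Set (EuclideanSpace ℝ (Fin d)) :=
  {ξ | θ = 0 ∨ |⟪ξ, θ⟫| < ρ ^ a * ‖θ‖}

/-- Υ_θ(ξ): the points θ-resonant congruent to ξ. -/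
def upsTheta (ρ a : ℝ) (θ ξ : EuclideanSpace ℝ (Fin d)) : Set (EuclideanSpace ℝ (Fin d)) :=
  {η | ξ ∈ layer ρ a θ ∧ η ∈ layer ρ a θ ∧ ∃ l : ℤ, ξ - η = (l : ℝ) • θ}

/-- One step of resonant congruence (with some θ ∈ Θ_r⁰). -/
def resStep (B : Basis (Fin d) ℝ (EuclideanSpace ℝ (Fin d))) (ρ a r : ℝ)
    (ξ η : EuclideanSpace ℝ (Fin d)) : Prop :=
  ∃ θ ∈ Theta0 B r, η ∈ upsTheta ρ a θ ξ

/-- Υ(ξ): all points resonant congruent to ξ. -/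
def Ups (B : Basis (Fin d) ℝ (EuclideanSpace ℝ (Fin d))) (ρ a r : ℝ)
    (ξ : EuclideanSpace ℝ (Fin d)) : Set (EuclideanSpace ℝ (Fin d)) :=
  {η | Relation.ReflTransGen (resStep B ρ a r) ξ η}

/-- N(ξ) = Υ(ξ) − ξ. -/
def resN (B : Basis (Fin d) ℝ (EuclideanSpace ℝ (Fin d))) (ρ a r : ℝ)
    (ξ : EuclideanSpace ℝ (Fin d)) : Set (EuclideanSpace ℝ (Fin d)) :=
  {m | ξ + m ∈ Ups B ρ a r ξ}

/-- Ξ₁(V) = {ξ : |ξ_V| < ρ^{α_n}}, n = dim V. -/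
def Xi1 (ρ : ℝ) (α : ℕ → ℝ) (V : Submodule ℝ (EuclideanSpace ℝ (Fin d))) :
    Set (EuclideanSpace ℝ (Fin d)) :=
  {ξ | ‖projV V ξ‖ < ρ ^ α (Module.finrank ℝ V)}

/-- Ξ₂(V) = ∪_{ξ ∈ Ξ₁(V)} Υ(ξ). -/
def Xi2 (B : Basis (Fin d) ℝ (EuclideanSpace ℝ (Fin d))) (ρ r : ℝ) (α : ℕ → ℝ)
    (V : Submodule ℝ (EuclideanSpace ℝ (Fin d))) : Set (EuclideanSpace ℝ (Fin d)) :=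
  {η | ∃ ξ ∈ Xi1 ρ α V, η ∈ Ups B ρ (α 1) r ξ}

/-- Ξ(V): Ξ₂(V) minus the Ξ₂(W) for all lattice r-subspaces W of larger dimension. -/
def Xi (B : Basis (Fin d) ℝ (EuclideanSpace ℝ (Fin d))) (ρ r : ℝ) (α : ℕ → ℝ)
    (V : Submodule ℝ (EuclideanSpace ℝ (Fin d))) : Set (EuclideanSpace ℝ (Fin d)) :=
  Xi2 B ρ r α V \
    ⋃ W ∈ {W : Submodule ℝ (EuclideanSpace ℝ (Fin d)) |
        IsLatticeSubspace B r W ∧ Module.finrank ℝ V < Module.finrank ℝ W},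
      Xi2 B ρ r α W

/-- The standing conditions on the parameters ρ ≥ 1, r, κ > 0 and the exponents α_j:
0 = α₀, α_{n+1} > α_n + 2κd², α_d < 1, r ≤ ρ^κ, and r ≥ r₀ (i.e. Θ_r⁰ spans ℝ^d). -/
def GoodParams (B : Basis (Fin d) ℝ (EuclideanSpace ℝ (Fin d))) (ρ r κ : ℝ)
    (α : ℕ → ℝ) : Prop :=
  1 ≤ ρ ∧ 0 < κ ∧ α 0 = 0 ∧ (∀ n < d, α n + 2 * κ * (d : ℝ) ^ 2 < α (n + 1)) ∧
    α d < 1 ∧ r ≤ ρ ^ κ ∧ Submodule.span ℝ (Theta0 B r) = ⊤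

/-!
The determinant of `d` independent dual lattice vectors is bounded away from zero, so the vectors of
norm at most `R` are uniformly transverse: one of them outside the span of others makes with it an
angle of sine at least `1 / K`, with `K` of order `R ^ d`. Hence, if `x` is nearly orthogonal to a
span and to one further vector, then it is nearly orthogonal to the larger span, at the cost of a
factor of order `K`.

Applied along a chain of resonant congruences, this shows by induction on the dimension of the span
of the vectors in use that the chain has diameter at most `(12 * K) ^ d * ρ ^ α 1`: a chain either
stays in a proper subspace, or its two endpoints both have small projections on the full span, which
contains their difference. A point of `Ξ₂(V) ∩ Ξ₂(W)` therefore has small projections on both `V`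
and `W`, hence on `V + W`. The total loss is at most `R ^ (2 * d ^ 2)` with `R = ρ ^ κ`, which is
exactly what the gap `α_{n+1} > α_n + 2κd²` absorbs.
-/

/-- Quantitative transversality of a set `T` of vectors to the subspaces its subsets span: a vector
of `T` outside such a subspace makes an angle with it whose sine is at least `1 / K`. The bound is
stated through distances, so that it makes sense in any normed space. -/
def UniformlyTransverse {E : Type*} [NormedAddCommGroup E] [NormedSpace ℝ E] (T : Set E) (K : ℝ) :
    Prop :=
  ∀ S ⊆ T, ∀ θ ∈ T, θ ∉ span ℝ S → ∀ p ∈ span ℝ S, ‖θ‖ ≤ K * ‖θ - p‖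

/-- One step of resonant congruence along a vector of `T`, for layers of half-width `w`. Compared
with `resStep`, the layers are closed and the displacement is any real multiple of the vector. -/
def ResonantStep {E : Type*} [NormedAddCommGroup E] [InnerProductSpace ℝ E] (T : Set E) (w : ℝ)
    (x y : E) : Prop :=
  ∃ θ ∈ T, |⟪x, θ⟫| ≤ w * ‖θ‖ ∧ |⟪y, θ⟫| ≤ w * ‖θ‖ ∧ x - y ∈ span ℝ {θ}

section LinearAlgebra

variable {K E : Type*} [DivisionRing K] [AddCommGroup E] [Module K E]

lemma finrank_span_insert_of_notMem [FiniteDimensional K E] {S : Set E} {θ : E}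
    (hθ : θ ∉ span K S) : finrank K (span K (insert θ S)) = finrank K (span K S) + 1 := by
  rw [span_insert, sup_comm, finrank_sup_span_singleton hθ]

lemma exists_finrank_sup_eq_add_one [FiniteDimensional K E] {V W : Submodule K E} (hVW : ¬ V ≤ W)
    (hWV : ¬ W ≤ V) :
    ∃ k, finrank K (V ⊔ W : Submodule K E) = k + 1 ∧ finrank K V ∈ Icc 1 k ∧
      finrank K W ∈ Icc 1 k := by
  have hV_lt := finrank_lt_finrank_of_lt (left_lt_sup.2 hWV)
  have hW_lt := finrank_lt_finrank_of_lt (right_lt_sup.2 hVW)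
  have hV_pos : 1 ≤ finrank K V := one_le_finrank_iff.2 fun h => hVW (h ▸ bot_le)
  have hW_pos : 1 ≤ finrank K W := one_le_finrank_iff.2 fun h => hWV (h ▸ bot_le)
  exact ⟨finrank K (V ⊔ W : Submodule K E) - 1, by omega, by grind, by grind⟩

lemma exists_subset_maximal_span {R M : Type*} [Semiring R] [AddCommMonoid M] [Module R M]
    [IsNoetherian R M] (T : Set M) {p : Submodule R M → Prop} (hp : p ⊥) :
    ∃ S ⊆ T, p (span R S) ∧ ∀ θ ∈ T, p (span R (insert θ S)) → θ ∈ S := by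
  obtain ⟨_, ⟨⟨S₀, hS₀, rfl⟩, hpS₀⟩, hmax⟩ := exists_maximal_of_wellFoundedGT
    (fun U : Submodule R M => (∃ S ⊆ T, span R S = U) ∧ p U)
    ⟨⊥, ⟨∅, empty_subset T, span_empty⟩, hp⟩
  have hspan : span R (T ∩ span R S₀) = span R S₀ :=
    span_eq_of_le _ inter_subset_right (span_mono (subset_inter hS₀ subset_span))
  refine ⟨T ∩ span R S₀, inter_subset_left, by rwa [hspan], fun θ hθ hpθ => ⟨hθ, ?_⟩⟩
  refine hmax ⟨⟨_, insert_subset hθ inter_subset_left, rfl⟩, hpθ⟩ ?_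
    (subset_span (mem_insert _ _))
  exact hspan.ge.trans (span_mono (subset_insert _ _))

lemma exists_basis_apply_eq_and_span_le {ι : Type*} (b : Basis ι K E) {T S : Set E}
    (hT : range b ⊆ T) (hS : S ⊆ T) {θ : E} (hθ : θ ∈ T) (hθS : θ ∉ span K S) :
    ∃ (v : Basis ι K E) (i : ι), v i = θ ∧ (∀ j, v j ∈ T) ∧ span K S ≤ span K (v '' {i}ᶜ) := by
  obtain ⟨S₀, hS₀, hspan, hli⟩ := exists_linearIndependent K S
  rw [← hspan] at hθS ⊢
  obtain ⟨s, hsT, hs, hTs, hsli⟩ := exists_linearIndepOn_id_extension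
    (LinearIndepOn.id_insert hli hθS) (insert_subset hθ (hS₀.trans hS))
  have hs_top : ⊤ ≤ span K (range ((↑) : s → E)) := by
    rw [Subtype.range_coe, ← b.span_eq]
    exact span_le.2 (hT.trans hTs)
  let v : Basis s K E := Basis.mk hsli hs_top
  have hv (y : s) : v y = y := Basis.mk_apply ..
  let e := v.indexEquiv b
  refine ⟨v.reindex e, e ⟨θ, hs (mem_insert _ _)⟩, by simp [hv], fun j => ?_, span_mono ?_⟩
  · rw [v.reindex_apply, hv]
    exact hsT (e.symm j).2
  · intro y hy
    refine ⟨e ⟨y, hs (mem_insert_of_mem _ hy)⟩, ?_, by simp [hv]⟩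
    intro hyθ
    obtain rfl : y = θ := congrArg Subtype.val (e.injective hyθ)
    exact hθS (subset_span hy)

lemma alternatingMap_update_sub_of_mem_span {R M N ι : Type*} [DecidableEq ι] [Ring R]
    [AddCommGroup M] [Module R M] [AddCommGroup N] [Module R N] (f : M [⋀^ι]→ₗ[R] N) (v : ι → M)
    {i : ι} {p : M} (hp : p ∈ span R (v '' {i}ᶜ)) :
    f (Function.update v i (v i - p)) = f v := by
  have hker : span R (v '' {i}ᶜ) ≤ (f.toMultilinearMap.toLinearMap v i).ker := by
    rw [span_le]
    rintro _ ⟨j, hj, rfl⟩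
    exact f.map_update_self v (Ne.symm hj)
  have hp_zero : f (Function.update v i p) = 0 := hker hp
  rw [f.map_update_sub, hp_zero, sub_zero, Function.update_eq_self]

end LinearAlgebra

section Lattice

variable {ι : Type*} [Fintype ι]

lemma exists_int_basis_det_eq [DecidableEq ι] {R M : Type*} [CommRing R] [IsDomain R] [CharZero R]
    [AddCommGroup M] [Module R M] (b : Basis ι R M) {v : ι → M}
    (hv : ∀ j, v j ∈ span ℤ (range b)) : ∃ n : ℤ, b.det v = n := by
  choose A hA using fun j => (b.mem_span_iff_repr_mem ℤ (v j)).1 (hv j)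
  refine ⟨(Matrix.of fun i j => A j i).det, ?_⟩
  rw [b.det_apply, Int.cast_det]
  congr 1
  ext i j
  simp [b.toMatrix_apply, ← hA]

lemma one_le_abs_basis_det [DecidableEq ι] {R M : Type*} [CommRing R] [LinearOrder R]
    [IsStrictOrderedRing R] [AddCommGroup M] [Module R M] (b v : Basis ι R M)
    (hv : ∀ j, v j ∈ span ℤ (range b)) : 1 ≤ |b.det v| := by
  obtain ⟨n, hn⟩ := exists_int_basis_det_eq b hv
  have hn_ne : n ≠ 0 := by
    rintro rfl
    exact (b.isUnit_det v).ne_zero (by rw [hn, Int.cast_zero])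
  rw [hn]
  exact_mod_cast Int.one_le_abs hn_ne

variable {E : Type*} [NormedAddCommGroup E] [NormedSpace ℝ E]

lemma exists_abs_basis_det_le [DecidableEq ι] (b : Basis ι ℝ E) :
    ∃ C > 0, ∀ v : ι → E, |b.det v| ≤ C * ∏ i, ‖v i‖ := by
  have := b.finiteDimensional_of_finite
  refine b.det.exists_bound_of_continuous (Continuous.matrix_det ?_)
  exact continuous_pi fun i => continuous_pi fun j =>
    (b.coord i).continuous_of_finiteDimensional.comp (continuous_apply j)

lemma UniformlyTransverse.mono {T T' : Set E} {K : ℝ} (h : UniformlyTransverse T' K)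
    (hT : T ⊆ T') : UniformlyTransverse T K :=
  fun S hS θ hθ => h S (hS.trans hT) θ (hT hθ)

/-- Replacing `θ` by `θ - p` in a basis of lattice vectors does not change its determinant, which is
a nonzero integer; being at most a constant times the product of the norms, it would be less than
`1` in absolute value if `θ - p` were short. -/
lemma exists_uniformlyTransverse_span_int_of_range_subset (b : Basis ι ℝ E) :
    ∃ C : ℝ, ∀ R, range b ⊆ {θ | θ ∈ span ℤ (range b) ∧ ‖θ‖ ≤ R} →
      UniformlyTransverse {θ | θ ∈ span ℤ (range b) ∧ ‖θ‖ ≤ R} (C * R ^ Fintype.card ι) := by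
  classical
  obtain ⟨C, hC, hdet⟩ := exists_abs_basis_det_le b
  refine ⟨C, fun R hb S hS θ hθ hθS p hp => ?_⟩
  obtain ⟨v, i, rfl, hv, hSv⟩ := exists_basis_apply_eq_and_span_le b hb hS hθ hθS
  have hR : 0 ≤ R := (norm_nonneg _).trans hθ.2
  have hone : 1 ≤ C * (‖v i - p‖ * R ^ (Fintype.card ι - 1)) := calc
    1 ≤ |b.det v| := one_le_abs_basis_det b v fun j => (hv j).1
    _ = |b.det (Function.update v i (v i - p))| := by
      rw [alternatingMap_update_sub_of_mem_span _ _ (hSv hp)]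
    _ ≤ C * ∏ j, ‖Function.update v i (v i - p) j‖ := hdet _
    _ = C * (‖v i - p‖ * ∏ j ∈ Finset.univ.erase i, ‖Function.update v i (v i - p) j‖) := by
      rw [← Finset.mul_prod_erase _ _ (Finset.mem_univ i), Function.update_self]
    _ ≤ C * (‖v i - p‖ * ∏ _j ∈ Finset.univ.erase i, R) := by
      gcongr with j hj
      rw [Function.update_of_ne (Finset.ne_of_mem_erase hj)]
      exact (hv j).2
    _ = C * (‖v i - p‖ * R ^ (Fintype.card ι - 1)) := by
      rw [Finset.prod_const, Finset.card_erase_of_mem (Finset.mem_univ i), Finset.card_univ]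
  calc ‖v i‖ ≤ R * 1 := by rw [mul_one]; exact (hv i).2
    _ ≤ R * (C * (‖v i - p‖ * R ^ (Fintype.card ι - 1))) := by gcongr
    _ = C * R ^ (Fintype.card ι - 1 + 1) * ‖v i - p‖ := by ring
    _ = C * R ^ Fintype.card ι * ‖v i - p‖ := by
      rw [Nat.sub_add_cancel (Fintype.card_pos_iff.2 ⟨i⟩)]

lemma exists_uniformlyTransverse_span_int (b : Basis ι ℝ E) :
    ∃ C ≥ 1, ∀ R ≥ 1,
      UniformlyTransverse {θ | θ ∈ span ℤ (range b) ∧ ‖θ‖ ≤ R} (C * R ^ Fintype.card ι) := by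
  obtain ⟨C, htrans⟩ := exists_uniformlyTransverse_span_int_of_range_subset b
  let M : ℝ := 1 + ∑ i, ‖b i‖
  have hM : 1 ≤ M := le_add_of_nonneg_right (by positivity)
  have hbM (i : ι) : ‖b i‖ ≤ M :=
    (Finset.single_le_sum (fun j _ => norm_nonneg (b j)) (Finset.mem_univ i)).trans
      (le_add_of_nonneg_left zero_le_one)
  refine ⟨max 1 (C * M ^ Fintype.card ι), le_max_left _ _, fun R hR S hS θ hθ hθS p hp => ?_⟩
  have hsubset : {θ | θ ∈ span ℤ (range b) ∧ ‖θ‖ ≤ R} ⊆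
      {θ | θ ∈ span ℤ (range b) ∧ ‖θ‖ ≤ M * R} := fun x hx =>
    ⟨hx.1, hx.2.trans (le_mul_of_one_le_left (by positivity) hM)⟩
  have hrange : range b ⊆ {θ | θ ∈ span ℤ (range b) ∧ ‖θ‖ ≤ M * R} := by
    rintro _ ⟨i, rfl⟩
    exact ⟨subset_span ⟨i, rfl⟩, (hbM i).trans (le_mul_of_one_le_right (by positivity) hR)⟩
  calc ‖θ‖ ≤ C * (M * R) ^ Fintype.card ι * ‖θ - p‖ :=
        (htrans _ hrange).mono hsubset S hS θ hθ hθS p hp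
    _ = C * M ^ Fintype.card ι * R ^ Fintype.card ι * ‖θ - p‖ := by rw [mul_pow, ← mul_assoc C]
    _ ≤ max 1 (C * M ^ Fintype.card ι) * R ^ Fintype.card ι * ‖θ - p‖ := by
      gcongr
      exact le_max_right _ _

end Lattice

section Projection

variable {E : Type*} [NormedAddCommGroup E] [InnerProductSpace ℝ E]

lemma norm_starProjection_le_iff_forall_abs_inner_le {U : Submodule ℝ E}
    [U.HasOrthogonalProjection] {x : E} {A : ℝ} (hA : 0 ≤ A) :
    ‖U.starProjection x‖ ≤ A ↔ ∀ u ∈ U, |⟪x, u⟫| ≤ A * ‖u‖ := by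
  have hinner (u : E) (hu : u ∈ U) : ⟪x, u⟫ = ⟪U.starProjection x, u⟫ := by
    rw [← sub_eq_zero, ← inner_sub_left, U.starProjection_inner_eq_zero x u hu]
  constructor
  · intro h u hu
    rw [hinner u hu]
    exact (abs_real_inner_le_norm _ _).trans (by gcongr)
  · intro h
    have hP := h _ (U.starProjection_apply_mem x)
    rw [hinner _ (U.starProjection_apply_mem x), real_inner_self_eq_norm_mul_norm,
      abs_mul_self] at hP
    by_contra! hlt
    exact hP.not_gt (mul_lt_mul_of_pos_right hlt (hA.trans_lt hlt))

variable [FiniteDimensional ℝ E] {T : Set E} {K : ℝ}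

lemma UniformlyTransverse.norm_starProjection_insert_le (hT : UniformlyTransverse T K)
    (hK : 1 ≤ K) {S : Set E} (hS : S ⊆ T) {θ : E} (hθ : θ ∈ T) (hθS : θ ∉ span ℝ S) {x : E} {A : ℝ}
    (hxS : ‖(span ℝ S).starProjection x‖ ≤ A) (hxθ : |⟪x, θ⟫| ≤ A * ‖θ‖) :
    ‖(span ℝ (insert θ S)).starProjection x‖ ≤ 3 * K * A := by
  have hA : 0 ≤ A := (norm_nonneg _).trans hxS
  rw [norm_starProjection_le_iff_forall_abs_inner_le (by positivity)]
  intro u hu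
  obtain ⟨t, s, hs, rfl⟩ := mem_span_insert.1 hu
  have htθ : ‖t • θ‖ ≤ K * ‖t • θ + s‖ := by
    rcases eq_or_ne t 0 with rfl | ht
    · simpa using by positivity
    have hp := hT S hS θ hθ hθS (-(t⁻¹ • s)) (neg_mem (smul_mem _ _ hs))
    calc ‖t • θ‖ ≤ ‖t‖ * (K * ‖θ - -(t⁻¹ • s)‖) := by rw [norm_smul]; gcongr
      _ = K * ‖t • (θ - -(t⁻¹ • s))‖ := by rw [norm_smul]; ring
      _ = K * ‖t • θ + s‖ := by rw [sub_neg_eq_add, smul_add, smul_inv_smul₀ ht]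
  have hs_norm : ‖s‖ ≤ ‖t • θ + s‖ + ‖t • θ‖ := by
    simpa using norm_sub_le (t • θ + s) (t • θ)
  have htwo : 1 + 2 * K ≤ 3 * K := by linarith
  calc |⟪x, t • θ + s⟫| ≤ |t| * |⟪x, θ⟫| + |⟪x, s⟫| := by
        rw [inner_add_right, inner_smul_right, ← abs_mul]
        exact abs_add_le _ _
    _ ≤ |t| * (A * ‖θ‖) + A * ‖s‖ := by
        gcongr
        exact (norm_starProjection_le_iff_forall_abs_inner_le hA).1 hxS s hs
    _ = A * (‖t • θ‖ + ‖s‖) := by rw [norm_smul, Real.norm_eq_abs]; ring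
    _ ≤ A * ((1 + 2 * K) * ‖t • θ + s‖) := by gcongr; linarith
    _ ≤ A * (3 * K * ‖t • θ + s‖) := by gcongr
    _ = 3 * K * A * ‖t • θ + s‖ := by ring

lemma UniformlyTransverse.norm_starProjection_union_le (hT : UniformlyTransverse T K)
    (hK : 1 ≤ K) {S S' : Set E} (hS : S ⊆ T) (hS' : S' ⊆ T) {x : E} {A : ℝ}
    (hxS : ‖(span ℝ S).starProjection x‖ ≤ A) (hxS' : ∀ θ ∈ S', |⟪x, θ⟫| ≤ A * ‖θ‖) :
    ‖(span ℝ (S ∪ S')).starProjection x‖ ≤ (3 * K) ^ finrank ℝ (span ℝ S') * A := by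
  have hA : 0 ≤ A := (norm_nonneg _).trans hxS
  have hK' : 1 ≤ 3 * K := by linarith
  obtain ⟨S₀, hS₀, hxS₀, hmax⟩ := exists_subset_maximal_span S'
    (p := fun U : Submodule ℝ E =>
      ‖(span ℝ S ⊔ U).starProjection x‖ ≤ (3 * K) ^ finrank ℝ U * A) (by simpa)
  simp only [← span_union] at hxS₀ hmax
  suffices h : S' ⊆ S₀ by rwa [hS₀.antisymm h] at hxS₀
  intro θ hθ
  refine hmax θ hθ ?_
  simp only [union_insert]
  by_cases hmem : θ ∈ span ℝ (S ∪ S₀)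
  · simp only [span_insert_eq_span hmem]
    refine hxS₀.trans ?_
    gcongr
    exact finrank_mono (span_mono (subset_insert _ _))
  · have hθS₀ : θ ∉ span ℝ S₀ := fun h => hmem (span_mono subset_union_right h)
    rw [finrank_span_insert_of_notMem hθS₀, pow_succ', mul_assoc]
    refine hT.norm_starProjection_insert_le hK (union_subset hS (hS₀.trans hS')) (hS' hθ) hmem hxS₀
      ((hxS' θ hθ).trans ?_)
    gcongr
    exact le_mul_of_one_le_left hA (one_le_pow₀ hK')

end Projection

section Resonance

variable {E : Type*} [NormedAddCommGroup E] [InnerProductSpace ℝ E] {T : Set E} {K w : ℝ} {x y : E}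

instance : Std.Symm (ResonantStep T w) where
  symm := fun _ _ ⟨θ, hθ, hx, hy, hxy⟩ => ⟨θ, hθ, hy, hx, by rwa [← neg_sub, neg_mem_iff]⟩

lemma sub_mem_span_of_reflTransGen (h : ReflTransGen (ResonantStep T w) x y) :
    x - y ∈ span ℝ T := by
  induction h with
  | refl => simp
  | tail _ hstep ih =>
    obtain ⟨θ, hθ, -, -, hsub⟩ := hstep
    simpa using add_mem ih (span_mono (singleton_subset_iff.2 hθ) hsub)

lemma abs_inner_le_of_norm_sub_le {θ : E} {A D : ℝ} (hy : |⟪y, θ⟫| ≤ A * ‖θ‖) (hxy : ‖x - y‖ ≤ D) :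
    |⟪x, θ⟫| ≤ (A + D) * ‖θ‖ := calc
  |⟪x, θ⟫| = |⟪y, θ⟫ + ⟪x - y, θ⟫| := by rw [← inner_add_left, add_sub_cancel]
  _ ≤ |⟪y, θ⟫| + |⟪x - y, θ⟫| := abs_add_le _ _
  _ ≤ A * ‖θ‖ + D * ‖θ‖ := by
    gcongr
    exact (abs_real_inner_le_norm _ _).trans (by gcongr)
  _ = (A + D) * ‖θ‖ := by ring

variable [FiniteDimensional ℝ E]

/-- A maximal `S` for which the projection of `x` is as small as claimed confines every chain from
`x`: as long as the chain only used vectors of `S` it has stayed close to `x`, so a step along a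
vector outside `S` would let `S` be enlarged. -/
lemma UniformlyTransverse.exists_subset_forall_reflTransGen (hT : UniformlyTransverse T K)
    (hK : 1 ≤ K) (hw : 0 ≤ w)
    (hdiam : ∀ S ⊆ T, finrank ℝ (span ℝ S) < finrank ℝ (span ℝ T) → ∀ x y,
      ReflTransGen (ResonantStep S w) x y → ‖x - y‖ ≤ (12 * K) ^ finrank ℝ (span ℝ S) * w)
    (x : E) :
    ∃ S ⊆ T, ‖(span ℝ S).starProjection x‖ ≤ (12 * K) ^ finrank ℝ (span ℝ S) * w / 2 ∧
      ∀ y, ReflTransGen (ResonantStep T w) x y → ReflTransGen (ResonantStep S w) x y := by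
  obtain ⟨S, hST, hxS, hmax⟩ := exists_subset_maximal_span T
    (p := fun U : Submodule ℝ E => ‖U.starProjection x‖ ≤ (12 * K) ^ finrank ℝ U * w / 2)
    (by simpa using by positivity)
  refine ⟨S, hST, hxS, fun y hxy => ?_⟩
  induction hxy with
  | refl => exact .refl
  | @tail y z _ hyz ih =>
    obtain ⟨θ, hθ, hy, hz, hsub⟩ := hyz
    refine ih.tail ⟨θ, hmax θ hθ ?_, hy, hz, hsub⟩
    by_cases hθS : θ ∈ span ℝ S
    · rwa [span_insert_eq_span hθS]
    have hrank : finrank ℝ (span ℝ S) < finrank ℝ (span ℝ T) :=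
      finrank_lt_finrank_of_lt ((span_mono hST).lt_of_not_ge fun h => hθS (h (subset_span hθ)))
    set M := (12 * K) ^ finrank ℝ (span ℝ S) * w with hM
    have hwM : w ≤ M := le_mul_of_one_le_left hw (one_le_pow₀ (by linarith))
    have hxθ : |⟪x, θ⟫| ≤ (w + M) * ‖θ‖ :=
      abs_inner_le_of_norm_sub_le hy (hdiam S hST hrank x y ih)
    calc ‖(span ℝ (insert θ S)).starProjection x‖ ≤ 3 * K * (2 * M) :=
          hT.norm_starProjection_insert_le hK hST hθ hθS (by linarith)
            (hxθ.trans (by gcongr; linarith))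
      _ = (12 * K) ^ finrank ℝ (span ℝ (insert θ S)) * w / 2 := by
        rw [finrank_span_insert_of_notMem hθS, hM]
        ring

theorem UniformlyTransverse.norm_sub_le_of_reflTransGen (hT : UniformlyTransverse T K)
    (hK : 1 ≤ K) (hw : 0 ≤ w) (hxy : ReflTransGen (ResonantStep T w) x y) :
    ‖x - y‖ ≤ (12 * K) ^ finrank ℝ (span ℝ T) * w := by
  induction hn : finrank ℝ (span ℝ T) using Nat.strong_induction_on generalizing T x y with
  | _ n ih =>
    subst hn
    have hdiam : ∀ S ⊆ T, finrank ℝ (span ℝ S) < finrank ℝ (span ℝ T) → ∀ x y,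
        ReflTransGen (ResonantStep S w) x y → ‖x - y‖ ≤ (12 * K) ^ finrank ℝ (span ℝ S) * w :=
      fun S hS hlt x y h => ih _ hlt (hT.mono hS) h rfl
    have hreduce (S : Set E) (hS : S ⊆ T) (h : ReflTransGen (ResonantStep S w) x y) :
        span ℝ S = span ℝ T ∨ ‖x - y‖ ≤ (12 * K) ^ finrank ℝ (span ℝ T) * w := by
      refine (span_mono hS).eq_or_lt.imp_right fun hlt => ?_
      refine (hdiam S hS (finrank_lt_finrank_of_lt hlt) x y h).trans ?_
      gcongr
      exacts [by linarith, finrank_mono hlt.le]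
    obtain ⟨S, hS, hx, hSx⟩ := hT.exists_subset_forall_reflTransGen hK hw hdiam x
    obtain ⟨S', hS', hy, hSy⟩ := hT.exists_subset_forall_reflTransGen hK hw hdiam y
    obtain hspan | hle := hreduce S hS (hSx y hxy)
    swap; · exact hle
    obtain hspan' | hle := hreduce S' hS' (symm (hSy x (symm hxy)))
    swap; · exact hle
    rw [hspan] at hx
    rw [hspan'] at hy
    calc ‖x - y‖ = ‖(span ℝ T).starProjection x - (span ℝ T).starProjection y‖ := by
          rw [← map_sub, starProjection_eq_self_iff.2 (sub_mem_span_of_reflTransGen hxy)]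
      _ ≤ (12 * K) ^ finrank ℝ (span ℝ T) * w := (norm_sub_le _ _).trans (by linarith)

theorem UniformlyTransverse.norm_starProjection_union_le_of_reflTransGen
    (hT : UniformlyTransverse T K) (hK : 1 ≤ K) (hw : 0 ≤ w) {S S' : Set E} (hS : S ⊆ T)
    (hS' : S' ⊆ T) {A : ℝ} (hwA : w ≤ A) {z : E}
    (hx : ‖(span ℝ S).starProjection x‖ ≤ A) (hxz : ReflTransGen (ResonantStep T w) x z)
    (hy : ‖(span ℝ S').starProjection y‖ ≤ A) (hyz : ReflTransGen (ResonantStep T w) y z) :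
    ‖(span ℝ (S ∪ S')).starProjection z‖ ≤
      (3 * K) ^ finrank ℝ (span ℝ S') * (2 * (12 * K) ^ finrank ℝ E * A) := by
  have hA : 0 ≤ A := hw.trans hwA
  have hK' : 1 ≤ 12 * K := by linarith
  have hdist {v : E} (h : ReflTransGen (ResonantStep T w) v z) :
      ‖z - v‖ ≤ (12 * K) ^ finrank ℝ E * A := by
    refine (hT.norm_sub_le_of_reflTransGen hK hw (symm h)).trans ?_
    gcongr
    exact finrank_le _
  have hA_le : A + (12 * K) ^ finrank ℝ E * A ≤ 2 * (12 * K) ^ finrank ℝ E * A := by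
    linarith [le_mul_of_one_le_left hA (one_le_pow₀ hK' (n := finrank ℝ E))]
  refine hT.norm_starProjection_union_le hK hS hS' ?_ fun θ hθ => ?_
  · rw [norm_starProjection_le_iff_forall_abs_inner_le (by positivity)]
    intro u hu
    have hxu := (norm_starProjection_le_iff_forall_abs_inner_le hA).1 hx u hu
    exact (abs_inner_le_of_norm_sub_le hxu (hdist hxz)).trans (by gcongr)
  · have hyθ := (norm_starProjection_le_iff_forall_abs_inner_le hA).1 hy θ (subset_span hθ)
    exact (abs_inner_le_of_norm_sub_le hyθ (hdist hyz)).trans (by gcongr)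

end Resonance

section DualLattice

lemma exists_basis_dualLattice_subset (B : Basis (Fin d) ℝ (EuclideanSpace ℝ (Fin d))) :
    ∃ b : Basis (Fin d) ℝ (EuclideanSpace ℝ (Fin d)), dualLattice B ⊆ span ℤ (range b) := by
  let form : LinearMap.BilinForm ℝ (EuclideanSpace ℝ (Fin d)) := (2 * Real.pi)⁻¹ • innerₗ _
  have hform (x y : EuclideanSpace ℝ (Fin d)) : form x y = (2 * Real.pi)⁻¹ * ⟪x, y⟫ := rfl
  have hpi : 2 * Real.pi ≠ 0 := Real.two_pi_pos.ne'
  have hself (x : EuclideanSpace ℝ (Fin d)) (hx : form x x = 0) : x = 0 := by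
    simpa [hform] using hx
  have hform_nondeg : form.Nondegenerate := ⟨fun x hx => hself x (hx x), fun x hx => hself x (hx x)⟩
  refine ⟨form.dualBasis hform_nondeg B, fun θ hθ => ?_⟩
  rw [← form.dualSubmodule_span_of_basis hform_nondeg B]
  intro g hg
  obtain ⟨k, hk⟩ := hθ g hg
  exact mem_one.2 ⟨k, by rw [hform, hk, inv_mul_cancel_left₀ hpi, algebraMap_int_eq, eq_intCast]⟩

lemma exists_uniformlyTransverse_theta0 (B : Basis (Fin d) ℝ (EuclideanSpace ℝ (Fin d))) :
    ∃ C ≥ 1, ∀ R ≥ 1, ∀ r ≤ R, UniformlyTransverse (Theta0 B r) (C * R ^ d) := by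
  obtain ⟨b, hb⟩ := exists_basis_dualLattice_subset B
  obtain ⟨C, hC, htrans⟩ := exists_uniformlyTransverse_span_int b
  refine ⟨C, hC, fun R hR r hr => ?_⟩
  rw [Fintype.card_fin] at htrans
  exact (htrans R hR).mono fun θ hθ => ⟨hb hθ.1, hθ.2.trans hr⟩

variable {B : Basis (Fin d) ℝ (EuclideanSpace ℝ (Fin d))} {ρ a r : ℝ}

lemma resonantStep_of_resStep {ξ η : EuclideanSpace ℝ (Fin d)} (h : resStep B ρ a r ξ η) :
    ResonantStep (Theta0 B r) (ρ ^ a) ξ η := by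
  obtain ⟨θ, hθ, hξ, hη, l, hl⟩ := h
  have hlayer {x : EuclideanSpace ℝ (Fin d)} (hx : x ∈ layer ρ a θ) : |⟪x, θ⟫| ≤ ρ ^ a * ‖θ‖ := by
    obtain rfl | hx := hx
    · simp
    · exact hx.le
  exact ⟨θ, hθ, hlayer hξ, hlayer hη, mem_span_singleton.2 ⟨l, hl.symm⟩⟩

lemma reflTransGen_resonantStep_of_mem_ups {ξ η : EuclideanSpace ℝ (Fin d)}
    (h : η ∈ Ups B ρ a r ξ) : ReflTransGen (ResonantStep (Theta0 B r) (ρ ^ a)) ξ η :=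
  ReflTransGen.mono (fun _ _ => resonantStep_of_resStep) _ _ h

lemma three_mul_pow_mul_two_mul_pow_le {C R : ℝ} {m : ℕ} (hC : 1 ≤ C)
    (hR : (12 * C) ^ (2 * d) ≤ R) (hm : m < d) :
    (3 * (C * R ^ d)) ^ m * (2 * (12 * (C * R ^ d)) ^ d) ≤ R ^ (2 * d ^ 2) := by
  have hR_one : 1 ≤ R := (one_le_pow₀ (by linarith)).trans hR
  set K := C * R ^ d with hK
  have hRK : R ≤ K := calc
    R ≤ R ^ d := le_self_pow₀ hR_one hm.ne_bot
    _ ≤ K := le_mul_of_one_le_left (by positivity) hC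
  have hK_pos : 0 < K := by linarith
  have hsmall : K * ((3 * K) ^ m * 2) ≤ (12 * K) ^ d := calc
    K * ((3 * K) ^ m * 2) = (3 * K) ^ m * (2 * K) := by ring
    _ ≤ (12 * K) ^ m * (12 * K) := by gcongr <;> norm_num
    _ = (12 * K) ^ (m + 1) := (pow_succ _ _).symm
    _ ≤ (12 * K) ^ d := pow_le_pow_right₀ (by linarith) hm
  refine le_of_mul_le_mul_left ?_ hK_pos
  calc K * ((3 * K) ^ m * (2 * (12 * K) ^ d)) = K * ((3 * K) ^ m * 2) * (12 * K) ^ d := by ring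
    _ ≤ (12 * K) ^ d * (12 * K) ^ d := by gcongr
    _ = (12 * C) ^ (2 * d) * R ^ (2 * d ^ 2) := by rw [hK]; ring
    _ ≤ K * R ^ (2 * d ^ 2) := by gcongr; exact hR.trans hRK

theorem exists_forall_norm_projV_sup_le (B : Basis (Fin d) ℝ (EuclideanSpace ℝ (Fin d))) :
    ∃ R₀, ∀ R ≥ R₀, ∀ r ≤ R, ∀ V W : Submodule ℝ (EuclideanSpace ℝ (Fin d)),
      IsLatticeSubspace B r V → IsLatticeSubspace B r W → W ≠ ⊤ →
      ∀ {ρ a A : ℝ}, 0 ≤ ρ → ρ ^ a ≤ A → ∀ {ξ ζ η : EuclideanSpace ℝ (Fin d)},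
        ‖projV V ξ‖ ≤ A → η ∈ Ups B ρ a r ξ → ‖projV W ζ‖ ≤ A → η ∈ Ups B ρ a r ζ →
        ‖projV (V ⊔ W) η‖ ≤ R ^ (2 * d ^ 2) * A := by
  obtain ⟨C, hC, htrans⟩ := exists_uniformlyTransverse_theta0 B
  refine ⟨(12 * C) ^ (2 * d), fun R hR r hr V W ⟨S, hS, hV⟩ ⟨S', hS', hW⟩ hW_top ρ a A hρ hA ξ ζ η
    hξ hξη hζ hζη => ?_⟩
  subst hV hW
  have hR_one : 1 ≤ R := (one_le_pow₀ (by linarith)).trans hR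
  have hm : finrank ℝ (span ℝ S') < d :=
    (finrank_lt hW_top).trans_eq finrank_euclideanSpace_fin
  have hbound := (htrans R hR_one r hr).norm_starProjection_union_le_of_reflTransGen
    (one_le_mul_of_one_le_of_one_le hC (one_le_pow₀ hR_one)) (by positivity) hS hS' hA
    hξ (reflTransGen_resonantStep_of_mem_ups hξη) hζ (reflTransGen_resonantStep_of_mem_ups hζη)
  rw [finrank_euclideanSpace_fin, ← mul_assoc] at hbound
  have hA_nonneg : 0 ≤ A := (norm_nonneg _).trans hξ
  rw [← span_union]
  refine hbound.trans ?_
  gcongr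
  exact three_mul_pow_mul_two_mul_pow_le hC hR hm

end DualLattice

lemma rpow_pow_mul_rpow_lt {ρ κ β γ : ℝ} (hρ : 1 < ρ) (h : β + 2 * κ * (d : ℝ) ^ 2 < γ) :
    (ρ ^ κ) ^ (2 * d ^ 2) * ρ ^ β < ρ ^ γ := by
  have hρ_pos : 0 < ρ := by linarith
  rw [← Real.rpow_mul_natCast hρ_pos.le, ← Real.rpow_add hρ_pos]
  refine Real.rpow_lt_rpow_of_exponent_lt hρ ?_
  push_cast
  linarith

theorem Xi2_inter_Xi2_subset_Xi1_sup_general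
    (B : Basis (Fin d) ℝ (EuclideanSpace ℝ (Fin d))) {κ : ℝ} (hκ : 0 < κ) :
    ∃ ρ₀ : ℝ, ∀ (ρ r : ℝ) (α : ℕ → ℝ), ρ₀ ≤ ρ → r ≤ ρ ^ κ →
      (∀ n, 1 ≤ n → n < d → α n + 2 * κ * (d : ℝ) ^ 2 < α (n + 1)) →
      ∀ V W : Submodule ℝ (EuclideanSpace ℝ (Fin d)),
        IsLatticeSubspace B r V → IsLatticeSubspace B r W →
        ¬ V ≤ W → ¬ W ≤ V →
        Xi2 B ρ r α V ∩ Xi2 B ρ r α W ⊆ Xi1 ρ α (V ⊔ W) := by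
  obtain ⟨R₀, hR₀⟩ := exists_forall_norm_projV_sup_le B
  obtain ⟨ρ₀, hρ₀⟩ := Filter.eventually_atTop.1
    (((tendsto_rpow_atTop hκ).eventually_ge_atTop R₀).and (Filter.eventually_gt_atTop 1))
  refine ⟨ρ₀, fun ρ r α hρ hr hα V W hV hW hVW hWV η ⟨⟨ξ, hξ, hξη⟩, ⟨ζ, hζ, hζη⟩⟩ => ?_⟩
  obtain ⟨hR, hρ_one⟩ := hρ₀ ρ hρ
  obtain ⟨k, hk, hVk, hWk⟩ := exists_finrank_sup_eq_add_one hVW hWV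
  have hkd : k < d := by simpa [hk] using finrank_le (V ⊔ W)
  have hmono : MonotoneOn α (Icc 1 d) := monotoneOn_of_le_add_one ordConnected_Icc
    fun n _ hn hn' => (le_add_of_nonneg_right (by positivity)).trans (hα n hn.1 hn'.2).le
  have hk_one : 1 ≤ k := hVk.1.trans hVk.2
  have hle {n : ℕ} (hn : n ∈ Icc 1 k) : ρ ^ α n ≤ ρ ^ α k :=
    Real.rpow_le_rpow_of_exponent_le hρ_one.le
      (hmono ⟨hn.1, hn.2.trans hkd.le⟩ ⟨hk_one, hkd.le⟩ hn.2)
  calc ‖projV (V ⊔ W) η‖ ≤ (ρ ^ κ) ^ (2 * d ^ 2) * ρ ^ α k :=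
        hR₀ _ hR r hr V W hV hW (fun h => hVW (h ▸ le_top)) (by linarith)
          (hle ⟨le_rfl, hk_one⟩) (hξ.le.trans (hle hVk)) hξη (hζ.le.trans (hle hWk)) hζη
    _ < ρ ^ α (finrank ℝ (V ⊔ W : Submodule ℝ (EuclideanSpace ℝ (Fin d)))) := by
        rw [hk]
        exact rpow_pow_mul_rpow_lt hρ_one (hα k hk_one hkd)

/-- Lemma 5.12: for sufficiently large ρ, for any two strongly distinct
lattice r-subspaces V and W, Ξ₂(V) ∩ Ξ₂(W) ⊆ Ξ₁(V + W). -/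
theorem Xi2_inter_Xi2_subset_Xi1_sup
    (d : ℕ) (hd : 2 ≤ d) (B : Basis (Fin d) ℝ (EuclideanSpace ℝ (Fin d)))
    (κ : ℝ) (α : ℕ → ℝ) :
    ∃ ρ₀ : ℝ, ∀ ρ r : ℝ, ρ₀ ≤ ρ → GoodParams B ρ r κ α →
      ∀ V W : Submodule ℝ (EuclideanSpace ℝ (Fin d)),
        IsLatticeSubspace B r V → IsLatticeSubspace B r W →
        ¬ V ≤ W → ¬ W ≤ V →
        Xi2 B ρ r α V ∩ Xi2 B ρ r α W ⊆ Xi1 ρ α (V ⊔ W) := by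
  rcases le_or_gt κ 0 with hκ | hκ
  · exact ⟨0, fun _ _ _ ⟨_, hκ_pos, _⟩ => absurd hκ_pos hκ.not_gt⟩
  · obtain ⟨ρ₀, h⟩ := Xi2_inter_Xi2_subset_Xi1_sup_general B hκ
    exact ⟨ρ₀, fun ρ r hρ ⟨_, _, _, hα, _, hr, _⟩ => h ρ r α hρ hr fun n _ => hα n⟩
end
end

section
/- For sufficiently large ρ the following holds: if V ∈ 𝒱(r,n) and W ∈ 𝒱(r,m) are strongly distinct lattice r-subspaces, then Ξ(V) ∩ Ξ₂(W) = ∅. In particular, if θ ∈ Θ_r and θ ∉ V, then Ξ(V) ∩ Λ(θ) = ∅. -/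
noncomputable section

open Set Submodule Module MeasureTheory Relation
open scoped RealInnerProductSpace

variable {d : ℕ}

/-!
Resonance classes are small. Every lattice spanned by linearly independent vectors of `Θ_r⁰` has
covolume bounded below, so by Hadamard's inequality a vector of `Θ_r⁰` outside a lattice
`r`-subspace `U` makes an angle with `U` which is bounded below by a negative power of `r`.
Adjoining that vector to `U` therefore multiplies a bound on the projection of a point by at most
`stepFactor B r`, which is of order `r ^ d`. At most `d` of the directions in a chain of
resonant congruences cause such a loss, so a resonance class has diameter at most
`2 * stepFactor B r ^ d * ρ ^ α 1`.

Suppose `ξ ∈ Ξ(V) ∩ Ξ₂(W)` with `W ⊄ V`. Then `dim W ≤ dim V` by the definition of `Ξ(V)`, and `W`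
contains some `θ ∈ Θ_r⁰` outside `V`. The point `η ∈ Ξ₁(W)` resonant congruent to `ξ` has small
projections onto `V`, because it is close to a point of `Ξ₁(V)`, and onto `ℝθ ⊆ W`. Hence its
projection onto `V + ℝθ` is small on the next scale `ρ ^ α (n + 1)`, so that `ξ ∈ Ξ₂(V + ℝθ)`,
which the definition of `Ξ(V)` excludes.
-/

lemma sup_span_singleton_sub_of_mem {R M : Type*} [Ring R] [AddCommGroup M] [Module R M]
    {U : Submodule R M} {x y : M} (hy : y ∈ U) :
    U ⊔ R ∙ (x - y) = U ⊔ R ∙ x := by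
  apply le_antisymm <;> refine sup_le le_sup_left ((span_singleton_le_iff_mem _ _).mpr ?_)
  · exact sub_mem (mem_sup_right (mem_span_singleton_self x)) (mem_sup_left hy)
  · have hmem : x - y + y ∈ U ⊔ R ∙ (x - y) :=
      add_mem (mem_sup_right (mem_span_singleton_self _)) (mem_sup_left hy)
    rwa [sub_add_cancel] at hmem

section OrthogonalProjection

variable {𝕜 E : Type*} [RCLike 𝕜] [NormedAddCommGroup E] [InnerProductSpace 𝕜 E]
  {U : Submodule 𝕜 E} [U.HasOrthogonalProjection]

lemma starProjection_eq_add_of_isOrtho {V W : Submodule 𝕜 E} [V.HasOrthogonalProjection]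
    [W.HasOrthogonalProjection] (hUV : U ⟂ V) (hW : U ⊔ V = W) (x : E) :
    W.starProjection x = U.starProjection x + V.starProjection x := by
  apply eq_starProjection_of_mem_orthogonal
  · rw [← hW]
    exact add_mem_sup (U.starProjection_apply_mem x) (V.starProjection_apply_mem x)
  · rw [← hW, ← inf_orthogonal, mem_inf]
    constructor
    · rw [← sub_sub]
      exact sub_mem (U.sub_starProjection_mem_orthogonal x)
        (hUV.symm (V.starProjection_apply_mem x))
    · rw [add_comm, ← sub_sub]
      exact sub_mem (V.sub_starProjection_mem_orthogonal x) (hUV (U.starProjection_apply_mem x))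

lemma norm_starProjection_span_singleton (x y : E) :
    ‖(𝕜 ∙ x).starProjection y‖ = ‖inner 𝕜 x y‖ / ‖x‖ := by
  rcases eq_or_ne x 0 with rfl | hx
  · simp
  · rw [starProjection_singleton, norm_smul, norm_div, RCLike.norm_ofReal, abs_sq]
    field_simp [norm_ne_zero_iff.mpr hx]

lemma inner_starProjection_right_of_mem {x : E} (hx : x ∈ U) (y : E) :
    inner 𝕜 x (U.starProjection y) = inner 𝕜 x y := by
  rw [← inner_starProjection_left_eq_right, starProjection_eq_self_iff.mpr hx]

lemma norm_inner_le_norm_mul_norm_starProjection {x : E} (hx : x ∈ U) (y : E) :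
    ‖inner 𝕜 x y‖ ≤ ‖x‖ * ‖U.starProjection y‖ := by
  rw [← inner_starProjection_right_of_mem hx]
  exact norm_inner_le_norm _ _

lemma norm_starProjection_le_add_norm_sub (x y : E) :
    ‖U.starProjection x‖ ≤ ‖U.starProjection y‖ + ‖x - y‖ := by
  have hsub : ‖U.starProjection x - U.starProjection y‖ ≤ ‖x - y‖ := by
    rw [← map_sub]
    exact U.norm_starProjection_apply_le _
  linarith [norm_sub_norm_le (U.starProjection x) (U.starProjection y)]

lemma norm_sub_le_of_sub_mem {x y : E} (h : x - y ∈ U) :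
    ‖x - y‖ ≤ ‖U.starProjection x‖ + ‖U.starProjection y‖ := by
  rw [← starProjection_eq_self_iff.mpr h, map_sub]
  exact norm_sub_le _ _

/- The projection onto `U ⊔ 𝕜 ∙ x` splits along `U` and `u = x - U.starProjection x`, and
`⟪u, y⟫ = ⟪x, y⟫ - ⟪U.starProjection x, U.starProjection y⟫`. -/
lemma norm_starProjection_sup_span_singleton_le {x y : E}
    [(U ⊔ 𝕜 ∙ x).HasOrthogonalProjection] {b c : ℝ} (hxU : x ∉ U)
    (hyU : ‖U.starProjection y‖ ≤ b) (hxy : ‖inner 𝕜 x y‖ ≤ b * ‖x‖)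
    (hc : ‖x‖ ≤ c * ‖x - U.starProjection x‖) :
    ‖(U ⊔ 𝕜 ∙ x).starProjection y‖ ≤ (1 + 2 * c) * b := by
  set u := x - U.starProjection x with hu
  have hu_pos : 0 < ‖u‖ := norm_pos_iff.mpr fun h =>
    hxU (starProjection_eq_self_iff.mp (sub_eq_zero.mp h).symm)
  have hb : 0 ≤ b := (norm_nonneg _).trans hyU
  have huU : U ⟂ 𝕜 ∙ u := by
    rw [isOrtho_comm, IsOrtho, span_singleton_le_iff_mem]
    exact U.sub_starProjection_mem_orthogonal x
  have hxU_y : ‖inner 𝕜 (U.starProjection x) y‖ ≤ ‖x‖ * b :=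
    (norm_inner_le_norm_mul_norm_starProjection (U.starProjection_apply_mem x) y).trans
      (mul_le_mul (U.norm_starProjection_apply_le x) hyU (norm_nonneg _) (norm_nonneg _))
  have huy : ‖inner 𝕜 u y‖ ≤ 2 * c * b * ‖u‖ :=
    calc ‖inner 𝕜 u y‖ ≤ ‖inner 𝕜 x y‖ + ‖inner 𝕜 (U.starProjection x) y‖ := by
          rw [hu, inner_sub_left]
          exact norm_sub_le _ _
      _ ≤ 2 * b * ‖x‖ := by linarith
      _ ≤ 2 * b * (c * ‖u‖) := by gcongr
      _ = 2 * c * b * ‖u‖ := by ring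
  calc ‖(U ⊔ 𝕜 ∙ x).starProjection y‖
      = ‖U.starProjection y + (𝕜 ∙ u).starProjection y‖ := by
        rw [starProjection_eq_add_of_isOrtho huU
          (sup_span_singleton_sub_of_mem (U.starProjection_apply_mem x))]
    _ ≤ ‖U.starProjection y‖ + ‖inner 𝕜 u y‖ / ‖u‖ := by
        rw [← norm_starProjection_span_singleton]
        exact norm_add_le _ _
    _ ≤ b + 2 * c * b := add_le_add hyU ((div_le_iff₀ hu_pos).mpr huy)
    _ = (1 + 2 * c) * b := by ring

end OrthogonalProjection

section Determinant

lemma exists_basis_span_le_ker_coord {ι K M : Type*} [DivisionRing K] [AddCommGroup M] [Module K M]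
    (e : Basis ι K M) {S T : Set M} (hST : S ⊆ T) (hT : span K T = ⊤) {x : M} (hxT : x ∈ T)
    (hxS : x ∉ span K S) :
    ∃ (b : Basis ι K M) (i : ι), (∀ j, b j ∈ T) ∧ b i = x ∧
      span K S ≤ LinearMap.ker (b.coord i) := by
  obtain ⟨s, hsS, -, hSs, hs⟩ :=
    exists_linearIndepOn_id_extension (linearIndepOn_empty K id) (empty_subset S)
  have hspan : span K s = span K S := le_antisymm (span_mono hsS) (span_le.mpr hSs)
  have hxs : LinearIndepOn K id (insert x s) := hs.id_insert (by rwa [hspan])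
  have hsT : insert x s ⊆ T := insert_subset hxT (hsS.trans hST)
  let b := Basis.extendLe hxs hsT hT.ge
  have hmem : ∀ {y}, y ∈ insert x s → y ∈ range b := fun hy =>
    Basis.subset_extendLe hxs hsT hT.ge hy
  obtain ⟨k, hk⟩ := hmem (mem_insert x s)
  let f := b.indexEquiv e
  refine ⟨b.reindex f, f k, fun j => ?_, by simp [hk], ?_⟩
  · rw [b.reindex_apply]
    exact Basis.extendLe_subset hxs hsT hT.ge (mem_range_self _)
  · rw [← hspan, span_le]
    intro y hy
    obtain ⟨l, rfl⟩ := hmem (mem_insert_of_mem x hy)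
    have hlk : l ≠ k := by
      rintro rfl
      exact hxS (hspan ▸ subset_span (hk ▸ hy))
    simp [hlk]

lemma det_update_eq_coord_mul {ι R M : Type*} [CommRing R] [AddCommGroup M] [Module R M] [Fintype ι]
    [DecidableEq ι] (e b : Basis ι R M) (i : ι) (x : M) :
    e.det (Function.update b i x) = b.coord i x * e.det b := by
  have h := LinearMap.congr_fun
    (e.det_smul_mk_coord_eq_det_update b.linearIndependent b.span_eq.ge i) x
  have hb : Basis.mk b.linearIndependent b.span_eq.ge = b := Basis.eq_of_apply_eq fun j => by simp
  rw [hb] at h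
  simpa [mul_comm] using h.symm

variable {E : Type*} [NormedAddCommGroup E] [InnerProductSpace ℝ E]

lemma abs_det_le_prod_norm {ι : Type*} [Fintype ι] [DecidableEq ι] (e : OrthonormalBasis ι ℝ E)
    (v : ι → E) : |e.toBasis.det v| ≤ ∏ i, ‖v i‖ := by
  let f := Fintype.equivFin ι
  have : Fact (finrank ℝ E = Fintype.card ι) := ⟨finrank_eq_card_basis e.toBasis⟩
  have hdet : e.toBasis.det v = (e.reindex f).toBasis.det (v ∘ f.symm) := by
    rw [e.reindex_toBasis, Basis.det_reindex, Function.comp_assoc, f.symm_comp_self,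
      Function.comp_id]
  rw [hdet, ← (e.reindex f).toBasis.orientation.volumeForm_robust' (e.reindex f)]
  refine ((e.reindex f).toBasis.orientation.abs_volumeForm_apply_le _).trans_eq ?_
  exact f.symm.prod_comp fun i => ‖v i‖

lemma det_of_inner_eq_det_mul_det {ι : Type*} [Fintype ι] [DecidableEq ι]
    (e : OrthonormalBasis ι ℝ E) (v w : ι → E) :
    (Matrix.of fun i j => ⟪v i, w j⟫).det = e.toBasis.det v * e.toBasis.det w := by
  rw [Basis.det_apply, Basis.det_apply, ← Matrix.det_transpose (e.toBasis.toMatrix v),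
    ← Matrix.det_mul]
  congr 1
  ext i j
  simp only [Matrix.of_apply, Matrix.mul_apply, Matrix.transpose_apply, Basis.toMatrix_apply,
    OrthonormalBasis.coe_toBasis_repr_apply, e.repr_apply_apply]
  rw [← e.sum_inner_mul_inner (v i)]
  exact Finset.sum_congr rfl fun k _ => by rw [real_inner_comm]

lemma abs_det_le_norm_sub_starProjection_mul_prod {ι : Type*} [Fintype ι] [DecidableEq ι]
    (e : OrthonormalBasis ι ℝ E) (b : Basis ι ℝ E) (i : ι) {U : Submodule ℝ E}
    [U.HasOrthogonalProjection] (hU : U ≤ LinearMap.ker (b.coord i)) :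
    |e.toBasis.det b| ≤ ‖b i - U.starProjection (b i)‖ * ∏ j ∈ Finset.univ.erase i, ‖b j‖ := by
  set u := b i - U.starProjection (b i) with hu
  have hcoord : b.coord i u = 1 := by
    rw [hu, map_sub, LinearMap.mem_ker.mp (hU (U.starProjection_apply_mem _))]
    simp
  calc |e.toBasis.det b| = |e.toBasis.det (Function.update b i u)| := by
        rw [det_update_eq_coord_mul, hcoord, one_mul]
    _ ≤ ∏ j, ‖Function.update b i u j‖ := abs_det_le_prod_norm e _
    _ = ‖u‖ * ∏ j ∈ Finset.univ.erase i, ‖b j‖ := by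
        rw [← Finset.mul_prod_erase _ _ (Finset.mem_univ i), Function.update_self]
        congr 1
        refine Finset.prod_congr rfl fun j hj => ?_
        rw [Function.update_of_ne (Finset.ne_of_mem_erase hj)]

end Determinant

section DualLattice

variable {B : Basis (Fin d) ℝ (EuclideanSpace ℝ (Fin d))} {r : ℝ}
  {U V W : Submodule ℝ (EuclideanSpace ℝ (Fin d))} {θ ξ : EuclideanSpace ℝ (Fin d)}

lemma latDet_nonneg (B : Basis (Fin d) ℝ (EuclideanSpace ℝ (Fin d))) : 0 ≤ latDet B :=
  abs_nonneg _

lemma two_pi_pow_le_abs_det_mul_latDet {b : Basis (Fin d) ℝ (EuclideanSpace ℝ (Fin d))}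
    (hb : ∀ i, b i ∈ dualLattice B) :
    (2 * Real.pi) ^ d ≤ |(EuclideanSpace.basisFun (Fin d) ℝ).toBasis.det b| * latDet B := by
  set e := EuclideanSpace.basisFun (Fin d) ℝ
  have hint : ∀ i j, ∃ k : ℤ, ⟪b i, B j⟫ = 2 * Real.pi * k := fun i j =>
    hb i (B j) (subset_span (mem_range_self j))
  choose k hk using hint
  have hdet : e.toBasis.det b * e.toBasis.det B = (2 * Real.pi) ^ d * (Matrix.of k).det := by
    have hmatrix : Matrix.of (fun i j => ⟪b i, B j⟫) =
        (2 * Real.pi) • (Matrix.of k).map (Int.cast : ℤ → ℝ) := by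
      ext i j
      simp [hk]
    rw [← det_of_inner_eq_det_mul_det, hmatrix, Matrix.det_smul, Fintype.card_fin, Int.cast_det]
  have hk_ne : (Matrix.of k).det ≠ 0 := fun h => by
    have hprod := (e.toBasis.isUnit_det b).mul (e.toBasis.isUnit_det B)
    simp [hdet, h] at hprod
  have hk_abs : (1 : ℝ) ≤ |((Matrix.of k).det : ℝ)| := by
    exact_mod_cast Int.one_le_abs hk_ne
  rw [latDet, ← abs_mul, hdet, abs_mul, abs_of_pos (by positivity)]
  exact le_mul_of_one_le_right (by positivity) hk_abs

/- Expanding the determinant of a basis of short dual lattice vectors through `θ`, whose other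
members span a space containing `U`, along `θ` bounds it by `‖θ - U.starProjection θ‖ * r ^ (d-1)`,
while the covolume of the dual lattice bounds it from below. -/
lemma norm_le_mul_norm_sub_starProjection (hspan : span ℝ (Theta0 B r) = ⊤)
    (hU : IsLatticeSubspace B r U) (hθ : θ ∈ Theta0 B r) (hθU : θ ∉ U) :
    ‖θ‖ ≤ latDet B * (r / (2 * Real.pi)) ^ d * ‖θ - U.starProjection θ‖ := by
  obtain ⟨S, hS, rfl⟩ := hU
  obtain ⟨b, i, hb, rfl, hSb⟩ := exists_basis_span_le_ker_coord
    (EuclideanSpace.basisFun (Fin d) ℝ).toBasis hS hspan hθ hθU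
  set δ := ‖b i - (span ℝ S).starProjection (b i)‖
  have : 0 ≤ r := (norm_nonneg _).trans hθ.2
  have hprod : ‖b i‖ * ∏ j ∈ Finset.univ.erase i, ‖b j‖ ≤ r ^ d := by
    rw [Finset.mul_prod_erase Finset.univ (fun j => ‖b j‖) (Finset.mem_univ i)]
    simpa using Finset.prod_le_prod (s := Finset.univ) (fun j _ => norm_nonneg (b j))
      (fun j _ => (hb j).2)
  have hdet : ‖b i‖ * (2 * Real.pi) ^ d ≤ latDet B * r ^ d * δ :=
    calc ‖b i‖ * (2 * Real.pi) ^ d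
        ≤ ‖b i‖ * (|(EuclideanSpace.basisFun (Fin d) ℝ).toBasis.det b| * latDet B) := by
          gcongr
          exact two_pi_pow_le_abs_det_mul_latDet fun j => (hb j).1
      _ ≤ ‖b i‖ * ((δ * ∏ j ∈ Finset.univ.erase i, ‖b j‖) * latDet B) := by
          have := latDet_nonneg B
          gcongr
          exact abs_det_le_norm_sub_starProjection_mul_prod _ b i hSb
      _ = latDet B * (‖b i‖ * ∏ j ∈ Finset.univ.erase i, ‖b j‖) * δ := by ring
      _ ≤ latDet B * r ^ d * δ := by
          have := latDet_nonneg B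
          gcongr
  rw [div_pow, mul_div_assoc', div_mul_eq_mul_div]
  exact (le_div_iff₀ (by positivity)).mpr hdet

lemma IsLatticeSubspace.sup (hV : IsLatticeSubspace B r V) (hW : IsLatticeSubspace B r W) :
    IsLatticeSubspace B r (V ⊔ W) := by
  obtain ⟨S, hS, rfl⟩ := hV
  obtain ⟨T, hT, rfl⟩ := hW
  exact ⟨S ∪ T, union_subset hS hT, (span_union _ _).symm⟩

lemma isLatticeSubspace_bot : IsLatticeSubspace B r ⊥ :=
  ⟨∅, empty_subset _, span_empty.symm⟩

lemma isLatticeSubspace_span_singleton (hθ : θ ∈ Theta0 B r) : IsLatticeSubspace B r (ℝ ∙ θ) :=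
  ⟨{θ}, singleton_subset_iff.mpr hθ, rfl⟩

lemma IsLatticeSubspace.exists_mem_Theta0_notMem (hW : IsLatticeSubspace B r W) (hWV : ¬ W ≤ V) :
    ∃ θ ∈ Theta0 B r, θ ∈ W ∧ θ ∉ V := by
  obtain ⟨S, hS, rfl⟩ := hW
  rw [span_le, not_subset] at hWV
  obtain ⟨θ, hθS, hθV⟩ := hWV
  exact ⟨θ, hS hθS, subset_span hθS, hθV⟩

/-- The factor by which the bound on a projection onto a lattice `r`-subspace grows when one more
vector of `Θ_r⁰` is adjoined to it. The summand `3` leaves room to absorb two further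
multiples of the bound. -/
def stepFactor (B : Basis (Fin d) ℝ (EuclideanSpace ℝ (Fin d))) (r : ℝ) : ℝ :=
  3 + 2 * (latDet B * (r / (2 * Real.pi)) ^ d)

lemma one_le_stepFactor (hr : 0 ≤ r) : 1 ≤ stepFactor B r := by
  have : 0 ≤ latDet B * (r / (2 * Real.pi)) ^ d := mul_nonneg (latDet_nonneg B) (by positivity)
  unfold stepFactor
  linarith

lemma norm_starProjection_sup_add_le_stepFactor_mul (hspan : span ℝ (Theta0 B r) = ⊤)
    (hU : IsLatticeSubspace B r U) (hθ : θ ∈ Theta0 B r) (hθU : θ ∉ U) {b : ℝ}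
    (hξU : ‖U.starProjection ξ‖ ≤ b) (hξθ : |⟪θ, ξ⟫| ≤ b * ‖θ‖) :
    ‖(U ⊔ ℝ ∙ θ).starProjection ξ‖ + 2 * b ≤ stepFactor B r * b := by
  have := norm_starProjection_sup_span_singleton_le hθU hξU hξθ
    (norm_le_mul_norm_sub_starProjection hspan hU hθ hθU)
  unfold stepFactor
  linarith

end DualLattice

section ResonanceClasses

variable {B : Basis (Fin d) ℝ (EuclideanSpace ℝ (Fin d))} {ρ a r : ℝ} {n : ℕ}
  {T : Submodule ℝ (EuclideanSpace ℝ (Fin d))} {ξ ζ η θ : EuclideanSpace ℝ (Fin d)}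

lemma mem_upsTheta_comm : η ∈ upsTheta ρ a θ ξ ↔ ξ ∈ upsTheta ρ a θ η := by
  have hneg : ∀ {x y : EuclideanSpace ℝ (Fin d)}, y ∈ upsTheta ρ a θ x → x ∈ upsTheta ρ a θ y := by
    rintro x y ⟨hx, hy, l, hl⟩
    exact ⟨hy, hx, -l, by rw [← neg_sub, hl, Int.cast_neg, neg_smul]⟩
  exact ⟨hneg, hneg⟩

lemma mem_Ups_comm : η ∈ Ups B ρ a r ξ ↔ ξ ∈ Ups B ρ a r η := by
  have : Std.Symm (resStep B ρ a r) :=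
    ⟨fun _ _ ⟨θ, hθ, h⟩ => ⟨θ, hθ, mem_upsTheta_comm.mp h⟩⟩
  exact comm (r := ReflTransGen (resStep B ρ a r))

lemma abs_inner_le_of_mem_layer (h : ξ ∈ layer ρ a θ) : |⟪θ, ξ⟫| ≤ ρ ^ a * ‖θ‖ := by
  rw [real_inner_comm]
  rcases h with rfl | h
  · simp
  · exact h.le

/-- A chain of `n` resonant congruences from `ξ` to `η` whose directions span `T`. It refines
`Ups` by recording `T`, whose dimension controls the distance from `ξ` to `η`. The length is an
index because arguments by induction on it must be able to reverse shorter chains. -/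
inductive ResChain (B : Basis (Fin d) ℝ (EuclideanSpace ℝ (Fin d))) (ρ a r : ℝ) :
    ℕ → Submodule ℝ (EuclideanSpace ℝ (Fin d)) → EuclideanSpace ℝ (Fin d) →
      EuclideanSpace ℝ (Fin d) → Prop
  | refl (ξ : EuclideanSpace ℝ (Fin d)) : ResChain B ρ a r 0 ⊥ ξ ξ
  | snoc {n : ℕ} {T : Submodule ℝ (EuclideanSpace ℝ (Fin d))}
      {ξ ζ η θ : EuclideanSpace ℝ (Fin d)} (hc : ResChain B ρ a r n T ξ ζ)
      (hθ : θ ∈ Theta0 B r) (hη : η ∈ upsTheta ρ a θ ζ) :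
      ResChain B ρ a r (n + 1) (T ⊔ ℝ ∙ θ) ξ η

namespace ResChain

lemma cons (hθ : θ ∈ Theta0 B r) (hζ : ζ ∈ upsTheta ρ a θ ξ) (hc : ResChain B ρ a r n T ζ η) :
    ResChain B ρ a r (n + 1) (T ⊔ ℝ ∙ θ) ξ η := by
  induction hc with
  | refl ζ => exact (refl ξ).snoc hθ hζ
  | snoc _ hθ' hη ih =>
    rw [sup_right_comm]
    exact (ih hζ).snoc hθ' hη

lemma symm (hc : ResChain B ρ a r n T ξ η) : ResChain B ρ a r n T η ξ := by
  induction hc with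
  | refl ξ => exact refl ξ
  | snoc _ hθ hη ih => exact cons hθ (mem_upsTheta_comm.mp hη) ih

lemma sub_mem (hc : ResChain B ρ a r n T ξ η) : ξ - η ∈ T := by
  induction hc with
  | refl ξ => simp
  | @snoc _ T ξ ζ η θ _ _ hη ih =>
    obtain ⟨-, -, l, hl⟩ := hη
    rw [← sub_add_sub_cancel ξ ζ η, hl]
    exact add_mem_sup ih (smul_mem _ _ (mem_span_singleton_self θ))

lemma isLatticeSubspace (hc : ResChain B ρ a r n T ξ η) : IsLatticeSubspace B r T := by
  induction hc with
  | refl _ => exact isLatticeSubspace_bot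
  | snoc _ hθ _ ih => exact ih.sup (isLatticeSubspace_span_singleton hθ)

lemma exists_of_mem_Ups (h : η ∈ Ups B ρ a r ξ) : ∃ n T, ResChain B ρ a r n T ξ η := by
  change ReflTransGen (resStep B ρ a r) ξ η at h
  induction h with
  | refl => exact ⟨0, ⊥, refl ξ⟩
  | tail _ hstep ih =>
    obtain ⟨n, T, hc⟩ := ih
    obtain ⟨θ, hθ, hη⟩ := hstep
    exact ⟨_, _, hc.snoc hθ hη⟩

/- Induction on the length: only a last direction `θ ∉ T` costs a factor. In that case both ends
of the shorter chain are controlled, hence so is its diameter, and the projection is estimated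
at the far end `ζ`, which lies in the layer of `θ`. -/
lemma norm_starProjection_le (hρ : 0 ≤ ρ) (hr : 0 ≤ r) (hspan : span ℝ (Theta0 B r) = ⊤)
    (hc : ResChain B ρ a r n T ξ η) :
    ‖T.starProjection ξ‖ ≤ stepFactor B r ^ finrank ℝ T * ρ ^ a := by
  induction n generalizing T ξ η with
  | zero =>
    cases hc
    simpa using Real.rpow_nonneg hρ a
  | succ n ih =>
    cases hc with
    | @snoc _ T _ ζ _ θ hc hθ hη =>
      by_cases hθT : θ ∈ T
      · rw [sup_eq_left.mpr ((span_singleton_le_iff_mem _ _).mpr hθT)]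
        exact ih hc
      set b := stepFactor B r ^ finrank ℝ T * ρ ^ a with hb
      have hρb : ρ ^ a ≤ b :=
        le_mul_of_one_le_left (Real.rpow_nonneg hρ a) (one_le_pow₀ (one_le_stepFactor hr))
      have hζθ : |⟪θ, ζ⟫| ≤ b * ‖θ‖ := (abs_inner_le_of_mem_layer hη.1).trans (by gcongr)
      have hstep := norm_starProjection_sup_add_le_stepFactor_mul hspan hc.isLatticeSubspace
        hθ hθT (ih hc.symm) hζθ
      calc ‖(T ⊔ ℝ ∙ θ).starProjection ξ‖
          ≤ ‖(T ⊔ ℝ ∙ θ).starProjection ζ‖ + ‖ξ - ζ‖ := norm_starProjection_le_add_norm_sub _ _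
        _ ≤ stepFactor B r * b := by
          linarith [norm_sub_le_of_sub_mem hc.sub_mem, ih hc, ih hc.symm]
        _ = stepFactor B r ^ finrank ℝ ↥(T ⊔ ℝ ∙ θ) * ρ ^ a := by
          rw [hb, finrank_sup_span_singleton hθT, pow_succ', mul_assoc]

end ResChain

lemma norm_sub_le_of_mem_Ups (hρ : 0 ≤ ρ) (hr : 0 ≤ r) (hspan : span ℝ (Theta0 B r) = ⊤)
    (h : η ∈ Ups B ρ a r ξ) : ‖ξ - η‖ ≤ 2 * (stepFactor B r ^ d * ρ ^ a) := by
  obtain ⟨n, T, hc⟩ := ResChain.exists_of_mem_Ups h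
  have hT : finrank ℝ T ≤ d := by simpa using T.finrank_le
  have hpow : stepFactor B r ^ finrank ℝ T * ρ ^ a ≤ stepFactor B r ^ d * ρ ^ a := by
    gcongr
    exact one_le_stepFactor hr
  linarith [norm_sub_le_of_sub_mem hc.sub_mem, hc.norm_starProjection_le hρ hr hspan,
    hc.symm.norm_starProjection_le hρ hr hspan]

end ResonanceClasses

section ResonantRegions

variable {B : Basis (Fin d) ℝ (EuclideanSpace ℝ (Fin d))} {ρ r κ : ℝ} {α : ℕ → ℝ}
  {V W : Submodule ℝ (EuclideanSpace ℝ (Fin d))} {ξ η θ : EuclideanSpace ℝ (Fin d)}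

lemma Xi1_subset_Xi2 : Xi1 ρ α V ⊆ Xi2 B ρ r α V :=
  fun ξ hξ => ⟨ξ, hξ, ReflTransGen.refl⟩

lemma mem_Xi2_of_mem_Ups (hξ : ξ ∈ Xi2 B ρ r α V) (h : η ∈ Ups B ρ (α 1) r ξ) :
    η ∈ Xi2 B ρ r α V := by
  obtain ⟨ζ, hζ, hξζ⟩ := hξ
  exact ⟨ζ, hζ, ReflTransGen.trans hξζ h⟩

lemma notMem_Xi2_of_mem_Xi (hξ : ξ ∈ Xi B ρ r α V) (hW : IsLatticeSubspace B r W)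
    (hVW : finrank ℝ V < finrank ℝ W) : ξ ∉ Xi2 B ρ r α W :=
  fun h => hξ.2 (mem_biUnion (mem_ofPred.mpr ⟨hW, hVW⟩) h)

lemma layer_subset_Xi1_span_singleton (hθ : θ ≠ 0) : layer ρ (α 1) θ ⊆ Xi1 ρ α (ℝ ∙ θ) := by
  intro ξ hξ
  change ‖(ℝ ∙ θ).starProjection ξ‖ < ρ ^ α (finrank ℝ (ℝ ∙ θ))
  rw [finrank_span_singleton hθ, norm_starProjection_span_singleton, Real.norm_eq_abs,
    real_inner_comm, div_lt_iff₀ (norm_pos_iff.mpr hθ)]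
  exact hξ.resolve_left hθ

lemma abs_inner_le_of_mem_Xi1 (hθ : θ ∈ W) (hη : η ∈ Xi1 ρ α W) :
    |⟪θ, η⟫| ≤ ρ ^ α (finrank ℝ W) * ‖θ‖ := by
  rw [mul_comm]
  exact (norm_inner_le_norm_mul_norm_starProjection hθ η).trans
    (mul_le_mul_of_nonneg_left hη.le (norm_nonneg θ))

lemma norm_starProjection_le_of_mem_Xi2 (hρ : 1 ≤ ρ) (hr : 0 ≤ r)
    (hspan : span ℝ (Theta0 B r) = ⊤) (hα : α 1 ≤ α (finrank ℝ V)) (hη : η ∈ Xi2 B ρ r α V) :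
    ‖V.starProjection η‖ ≤ 3 * (stepFactor B r ^ d * ρ ^ α (finrank ℝ V)) := by
  obtain ⟨ζ, hζ, hηζ⟩ := hη
  set s := ρ ^ α (finrank ℝ V)
  have hA : 1 ≤ stepFactor B r ^ d := one_le_pow₀ (one_le_stepFactor hr)
  have hζV : ‖V.starProjection ζ‖ ≤ stepFactor B r ^ d * s :=
    hζ.le.trans (le_mul_of_one_le_left (by positivity) hA)
  have hdiam : ‖η - ζ‖ ≤ 2 * (stepFactor B r ^ d * s) :=
    (norm_sub_le_of_mem_Ups (by positivity) hr hspan (mem_Ups_comm.mp hηζ)).trans <| by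
      gcongr
      exact Real.rpow_le_rpow_of_exponent_le hρ hα
  linarith [norm_starProjection_le_add_norm_sub (U := V) η ζ]

/-- An admissible value of the threshold `ρ₀` beyond which a single increment of the exponents
`α_n` absorbs all the constants lost in the argument. -/
def resonanceThreshold (B : Basis (Fin d) ℝ (EuclideanSpace ℝ (Fin d))) (κ : ℝ) : ℝ :=
  (3 * (3 + 2 * latDet B) ^ (d + 1)) ^ κ⁻¹

lemma one_lt_resonanceThreshold (hκ : 0 < κ) : 1 < resonanceThreshold B κ := by
  refine Real.one_lt_rpow ?_ (inv_pos.mpr hκ)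
  have hbase : 1 ≤ 3 + 2 * latDet B := by linarith [latDet_nonneg B]
  linarith [one_le_pow₀ (n := d + 1) hbase]

lemma three_mul_stepFactor_pow_mul_rpow_lt (hd : 2 ≤ d) (hκ : 0 < κ)
    (hρ : resonanceThreshold B κ ≤ ρ) (hr₀ : 0 ≤ r) (hr : r ≤ ρ ^ κ) {s t : ℝ}
    (hst : s + 2 * κ * (d : ℝ) ^ 2 < t) :
    3 * stepFactor B r ^ (d + 1) * ρ ^ s < ρ ^ t := by
  have hρ1 : 1 < ρ := (one_lt_resonanceThreshold hκ).trans_le hρ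
  have hρ0 : 0 < ρ := zero_lt_one.trans hρ1
  have hB := latDet_nonneg B
  set K := 3 + 2 * latDet B with hK
  set R := ρ ^ κ with hR
  have hR1 : 1 ≤ R := Real.one_le_rpow hρ1.le hκ.le
  have hKR : 3 * K ^ (d + 1) ≤ R :=
    (Real.rpow_inv_le_iff_of_pos (by positivity) hρ0.le hκ).mp hρ
  have hstep : stepFactor B r ≤ K * R ^ d :=
    calc 3 + 2 * (latDet B * (r / (2 * Real.pi)) ^ d)
        ≤ 3 * R ^ d + 2 * (latDet B * R ^ d) := by
          gcongr
          · exact le_mul_of_one_le_right zero_le_three (one_le_pow₀ hR1)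
          · exact (div_le_self hr₀ (by linarith [Real.pi_gt_three])).trans hr
      _ = K * R ^ d := by rw [hK]; ring
  have hstep0 : 0 ≤ stepFactor B r := zero_le_one.trans (one_le_stepFactor hr₀)
  calc 3 * stepFactor B r ^ (d + 1) * ρ ^ s
      ≤ 3 * (K * R ^ d) ^ (d + 1) * ρ ^ s := by gcongr
    _ = (3 * K ^ (d + 1)) * R ^ (d * (d + 1)) * ρ ^ s := by rw [mul_pow, ← pow_mul]; ring
    _ ≤ R * R ^ (d * (d + 1)) * ρ ^ s := by gcongr
    _ = R ^ (d * (d + 1) + 1) * ρ ^ s := by rw [pow_succ']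
    _ ≤ R ^ (2 * d ^ 2) * ρ ^ s := by
        gcongr
        nlinarith
    _ = ρ ^ (s + 2 * κ * (d : ℝ) ^ 2) := by
        rw [hR, ← Real.rpow_mul_natCast hρ0.le, ← Real.rpow_add hρ0]
        congr 1
        push_cast
        ring
    _ < ρ ^ t := Real.rpow_lt_rpow_of_exponent_lt hρ1 hst

lemma mem_Xi1_sup_span_singleton (hκ : 0 < κ)
    (hα : ∀ n < d, α n + 2 * κ * (d : ℝ) ^ 2 < α (n + 1)) (hρ : resonanceThreshold B κ ≤ ρ)
    (hr : r ≤ ρ ^ κ) (hspan : span ℝ (Theta0 B r) = ⊤) (hV : IsLatticeSubspace B r V)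
    (hWV : finrank ℝ W ≤ finrank ℝ V) (hθ : θ ∈ Theta0 B r) (hθW : θ ∈ W) (hθV : θ ∉ V)
    (hηV : η ∈ Xi2 B ρ r α V) (hηW : η ∈ Xi1 ρ α W) :
    η ∈ Xi1 ρ α (V ⊔ ℝ ∙ θ) := by
  have hρ1 : 1 ≤ ρ := (one_lt_resonanceThreshold hκ).le.trans hρ
  have hr₀ : 0 ≤ r := (norm_nonneg θ).trans hθ.2
  have hsup : finrank ℝ ↥(V ⊔ ℝ ∙ θ) = finrank ℝ V + 1 := finrank_sup_span_singleton hθV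
  have hVd : finrank ℝ V < d := by
    simpa [hsup, Nat.succ_le_iff] using (V ⊔ ℝ ∙ θ).finrank_le
  have hW1 : 1 ≤ finrank ℝ W := by
    rw [one_le_finrank_iff]
    rintro rfl
    exact hθV ((mem_bot ℝ).mp hθW ▸ zero_mem V)
  have hmono : MonotoneOn α (Iic d) := monotoneOn_of_le_succ ordConnected_Iic fun n _ _ hn =>
    (le_add_of_nonneg_right (by positivity)).trans (hα n hn).le
  set n := finrank ℝ V
  have hA : 1 ≤ stepFactor B r ^ d := one_le_pow₀ (one_le_stepFactor hr₀)
  set b := 3 * (stepFactor B r ^ d * ρ ^ α n) with hb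
  have hb_V : ‖V.starProjection η‖ ≤ b := norm_starProjection_le_of_mem_Xi2 hρ1 hr₀ hspan
    (hmono (hW1.trans (hWV.trans hVd.le)) hVd.le (hW1.trans hWV)) hηV
  have hρb : ρ ^ α (finrank ℝ W) ≤ b :=
    calc ρ ^ α (finrank ℝ W) ≤ ρ ^ α n :=
          Real.rpow_le_rpow_of_exponent_le hρ1 (hmono (hWV.trans hVd.le) hVd.le hWV)
      _ ≤ stepFactor B r ^ d * ρ ^ α n := le_mul_of_one_le_left (by positivity) hA
      _ ≤ b := le_mul_of_one_le_left (by positivity) (by norm_num)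
  have hθη : |⟪θ, η⟫| ≤ b * ‖θ‖ := (abs_inner_le_of_mem_Xi1 hθW hηW).trans (by gcongr)
  have hb_nonneg : 0 ≤ b := (norm_nonneg _).trans hb_V
  change ‖(V ⊔ ℝ ∙ θ).starProjection η‖ < ρ ^ α (finrank ℝ ↥(V ⊔ ℝ ∙ θ))
  rw [hsup]
  calc ‖(V ⊔ ℝ ∙ θ).starProjection η‖ ≤ stepFactor B r * b := by
        linarith [norm_starProjection_sup_add_le_stepFactor_mul hspan hV hθ hθV hb_V hθη]
    _ = 3 * stepFactor B r ^ (d + 1) * ρ ^ α n := by rw [hb]; ring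
    _ < ρ ^ α (n + 1) :=
        three_mul_stepFactor_pow_mul_rpow_lt (by omega) hκ hρ hr₀ hr (hα n hVd)

end ResonantRegions

theorem Xi_disjoint_Xi2_of_stronglyDistinct_general
    {B : Basis (Fin d) ℝ (EuclideanSpace ℝ (Fin d))} {ρ r κ : ℝ} {α : ℕ → ℝ} (hκ : 0 < κ)
    (hα : ∀ n < d, α n + 2 * κ * (d : ℝ) ^ 2 < α (n + 1)) (hρ : resonanceThreshold B κ ≤ ρ)
    (hr : r ≤ ρ ^ κ) (hspan : span ℝ (Theta0 B r) = ⊤)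
    {V W : Submodule ℝ (EuclideanSpace ℝ (Fin d))} (hV : IsLatticeSubspace B r V)
    (hW : IsLatticeSubspace B r W) (hWV : ¬ W ≤ V) :
    Disjoint (Xi B ρ r α V) (Xi2 B ρ r α W) := by
  refine disjoint_left.mpr fun ξ hξV hξW => ?_
  have hdim : finrank ℝ W ≤ finrank ℝ V :=
    not_lt.mp fun hlt => notMem_Xi2_of_mem_Xi hξV hW hlt hξW
  obtain ⟨θ, hθ, hθW, hθV⟩ := hW.exists_mem_Theta0_notMem hWV
  obtain ⟨η, hηW, hηξ⟩ := hξW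
  have hηV : η ∈ Xi2 B ρ r α V := mem_Xi2_of_mem_Ups hξV.1 (mem_Ups_comm.mp hηξ)
  have hη : η ∈ Xi1 ρ α (V ⊔ ℝ ∙ θ) :=
    mem_Xi1_sup_span_singleton hκ hα hρ hr hspan hV hdim hθ hθW hθV hηV hηW
  have hlt : finrank ℝ V < finrank ℝ ↥(V ⊔ ℝ ∙ θ) := by
    rw [finrank_sup_span_singleton hθV]
    exact Nat.lt_succ_self _
  exact notMem_Xi2_of_mem_Xi hξV (hV.sup (isLatticeSubspace_span_singleton hθ)) hlt ⟨η, hη, hηξ⟩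

/-- Lemma 5.16: for sufficiently large ρ, if V and W are strongly distinct
lattice r-subspaces then Ξ(V) ∩ Ξ₂(W) = ∅; in particular, if θ ∈ Θ_r with θ ∉ V then
Ξ(V) ∩ Λ(θ) = ∅. -/
theorem Xi_disjoint_Xi2_of_stronglyDistinct
    (d : ℕ) (hd : 2 ≤ d) (B : Basis (Fin d) ℝ (EuclideanSpace ℝ (Fin d)))
    (κ : ℝ) (α : ℕ → ℝ) :
    ∃ ρ₀ : ℝ, ∀ ρ r : ℝ, ρ₀ ≤ ρ → GoodParams B ρ r κ α →
      (∀ V W : Submodule ℝ (EuclideanSpace ℝ (Fin d)),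
        IsLatticeSubspace B r V → IsLatticeSubspace B r W →
        ¬ V ≤ W → ¬ W ≤ V →
        Xi B ρ r α V ∩ Xi2 B ρ r α W = ∅) ∧
      (∀ V : Submodule ℝ (EuclideanSpace ℝ (Fin d)), IsLatticeSubspace B r V →
        ∀ θ ∈ Theta B r, θ ∉ V →
        Xi B ρ r α V ∩ layer ρ (α 1) θ = ∅) := by
  refine ⟨resonanceThreshold B κ, fun ρ r hρ ⟨_, hκ, _, hα, _, hr, hspan⟩ => ?_⟩
  refine ⟨fun V W hV hW _ hWV => ?_, fun V hV θ ⟨hθ, hθ0, hθr⟩ hθV => ?_⟩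
  · exact (Xi_disjoint_Xi2_of_stronglyDistinct_general hκ hα hρ hr hspan hV hW hWV).inter_eq
  · have hdisj := Xi_disjoint_Xi2_of_stronglyDistinct_general hκ hα hρ hr hspan hV
      (isLatticeSubspace_span_singleton ⟨hθ, hθr⟩) (by rwa [span_singleton_le_iff_mem])
    exact (hdisj.mono_right ((layer_subset_Xi1_span_singleton hθ0).trans Xi1_subset_Xi2)).inter_eq
end
end
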